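/- Let G be an (m,n)-grid USO and let v = (i,j) be any vertex. Then v is the unique sink of the subgrid I_v × J_v, where I_v = {i' ∈ Fin m : (i',j) ⪰ v} and J_v = {j' ∈ Fin n : (i,j') ⪰ v}. -/

import Mathlib

/-!
The statement amounts to acyclicity of grid USOs: if `(i', j) ⪰ v` and yet `v → (i', j)`, there is
a directed cycle (uniqueness of the sink is part of the USO property).

Suppose there is a directed cycle and take a shortest one, `u 0 → u 1 → ⋯ → u L = u 0`. It has no
chords, so (a line carries no directed triangle) it alternates between row and column steps, and
`L = 2 k`. Write `u (2 i) = (a i, b i)` and `u (2 i + 1) = (a i, b (i + 1))`, with indices mod `k`.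
A `2 × 2` grid is not a directed cycle, so `k ≥ 3`. Call `(a i, b j)` with `j ≠ i, i + 1` an off
vertex. Its row and column contain four vertices of the cycle, and absence of shortcuts forces all
four edges to them to point towards it (type S) or all four away from it (type T)
(`MinCycle.classify`). In a `2 × 2` subgrid two opposite corners cannot both be sinks
(`IsUSO.square`), hence
* `(i, j)` and `(j, i + 1)` have opposite types (`MinCycle.ruleA`);
* `(i, j)` and `(j, i)` have opposite types if both are off (`MinCycle.ruleB`).

Together these show that the type is constant along each row `i` (`MinCycle.row_const`), and then
the first rule, applied to `(i, i + 2)` and `(i, i - 1)`, says that row `i` differs in type from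
rows `i + 2` and `i - 1`. So the rows `i`, `i + 1`, `i + 2` differ pairwise, while there are only
two types.
-/

/-- Two vertices of the `(m,n)`-grid are adjacent iff they are distinct and agree
in the first coordinate (same row) or in the second coordinate (same column). -/
def GridAdj {m n : ℕ} (u v : Fin m × Fin n) : Prop :=
  u ≠ v ∧ (u.1 = v.1 ∨ u.2 = v.2)

/-- An orientation of the `(m,n)`-grid: every edge gets exactly one direction. -/
structure GridOrientation (m n : ℕ) where
  dir : Fin m × Fin n → Fin m × Fin n → Bool
  dir_adj : ∀ u v, dir u v = true → GridAdj u v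
  dir_total : ∀ u v, GridAdj u v → (dir u v = true ↔ dir v u = false)

/-- `v` is a sink of the subgrid `I × J`: it lies in the subgrid and has no
outgoing edge to any vertex of the subgrid. -/
def IsSinkIn {m n : ℕ} (o : GridOrientation m n) (I : Set (Fin m)) (J : Set (Fin n))
    (v : Fin m × Fin n) : Prop :=
  v.1 ∈ I ∧ v.2 ∈ J ∧ ∀ u : Fin m × Fin n, u.1 ∈ I → u.2 ∈ J → o.dir v u = false

/-- A unique sink orientation: every nonempty subgrid has exactly one sink. -/
def IsUSO {m n : ℕ} (o : GridOrientation m n) : Prop :=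
  ∀ (I : Set (Fin m)) (J : Set (Fin n)), I.Nonempty → J.Nonempty →
    ∃! v : Fin m × Fin n, IsSinkIn o I J v

/-- The global sink: the sink of the whole grid. -/
def IsGlobalSink {m n : ℕ} (o : GridOrientation m n) (v : Fin m × Fin n) : Prop :=
  IsSinkIn o Set.univ Set.univ v

/-- `u ⪰ v` : `u = v` or there is a directed path from `u` to `v`. -/
def Reaches {m n : ℕ} (o : GridOrientation m n) (u v : Fin m × Fin n) : Prop :=
  Relation.ReflTransGen (fun a b => o.dir a b = true) u v

/-- `I_v`: the set of row indices `i'` with `(i', v.2) ⪰ v`. -/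
def rowSet {m n : ℕ} (o : GridOrientation m n) (v : Fin m × Fin n) : Set (Fin m) :=
  {i' | Reaches o (i', v.2) v}

/-- `J_v`: the set of column indices `j'` with `(v.1, j') ⪰ v`. -/
def colSet {m n : ℕ} (o : GridOrientation m n) (v : Fin m × Fin n) : Set (Fin n) :=
  {j' | Reaches o (v.1, j') v}

/-! ### Walks of prescribed length -/

/-- `RelWalk R l x y`: there is an `R`-walk of length exactly `l` from `x` to `y`. -/
def RelWalk {α : Type*} (R : α → α → Prop) : ℕ → α → α → Prop
  | 0, x, y => x = y
  | l + 1, x, z => ∃ y, RelWalk R l x y ∧ R y z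

namespace RelWalk

variable {α : Type*} {R : α → α → Prop}

lemma single {x y : α} (h : R x y) : RelWalk R 1 x y := ⟨x, rfl, h⟩

lemma two {x y z : α} (h : R x y) (h' : R y z) : RelWalk R 2 x z := ⟨y, single h, h'⟩

lemma append {p q : ℕ} {x y z : α} (h : RelWalk R p x y) (h' : RelWalk R q y z) :
    RelWalk R (p + q) x z := by
  induction q generalizing z with
  | zero => cases h'; exact h
  | succ q ih => obtain ⟨w, hw, hR⟩ := h'; exact ⟨w, ih hw, hR⟩

lemma of_seq {u : ℕ → α} (hu : ∀ t, R (u t) (u (t + 1))) (s l : ℕ) :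
    RelWalk R l (u s) (u (s + l)) := by
  induction l with
  | zero => rfl
  | succ l ih => exact ⟨_, ih, hu _⟩

lemma exists_seq {l : ℕ} {x y : α} (h : RelWalk R l x y) :
    ∃ p : ℕ → α, p 0 = x ∧ p l = y ∧ ∀ t < l, R (p t) (p (t + 1)) := by
  induction l generalizing y with
  | zero => exact ⟨fun _ => x, rfl, h, by simp⟩
  | succ l ih =>
    obtain ⟨w, hw, hR⟩ := h
    obtain ⟨p, h0, hl, hp⟩ := ih hw
    refine ⟨fun t => if t ≤ l then p t else y, by simp [h0], by simp, fun t ht => ?_⟩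
    rcases Nat.lt_or_ge t l with h1 | h1
    · simpa [h1.le, Nat.succ_le_of_lt h1] using hp t h1
    · obtain rfl : t = l := by omega
      simpa [hl] using hR

lemma exists_periodic {l : ℕ} (hl : 0 < l) {x : α} (h : RelWalk R l x x) :
    ∃ u : ℕ → α, (∀ t, R (u t) (u (t + 1))) ∧ ∀ t, u (t + l) = u t := by
  obtain ⟨p, h0, hpl, hp⟩ := h.exists_seq
  refine ⟨fun t => p (t % l), fun t => ?_, fun t => by simp⟩
  have h1 := Nat.mod_lt t hl
  have h2 := hp _ h1
  rcases Nat.lt_or_ge (t % l + 1) l with h3 | h3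
  · have : (t + 1) % l = t % l + 1 := by
      rw [Nat.add_mod, Nat.mod_eq_of_lt (show 1 < l by omega), Nat.mod_eq_of_lt h3]
    simpa only [this] using h2
  · have h4 : t % l + 1 = l := by omega
    have : (t + 1) % l = 0 := by rw [← Nat.mod_add_mod, h4, Nat.mod_self]
    simp only [this, h0]
    rwa [h4, hpl] at h2

lemma of_reflTransGen {x y : α} (h : Relation.ReflTransGen R x y) : ∃ l, RelWalk R l x y := by
  induction h with
  | refl => exact ⟨0, rfl⟩
  | tail _ hR ih => obtain ⟨l, hl⟩ := ih; exact ⟨l + 1, _, hl, hR⟩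

end RelWalk

/-! ### Edges, squares and triangles in a grid USO -/

section Basic

variable {m n : ℕ} {o : GridOrientation m n}

/-- The edge relation of an orientation as a `Prop`-valued relation. -/
def GridOrientation.Arrow (o : GridOrientation m n) (x y : Fin m × Fin n) : Prop :=
  o.dir x y = true

lemma GridOrientation.Arrow.adj {x y : Fin m × Fin n} (h : o.Arrow x y) : GridAdj x y :=
  o.dir_adj _ _ h

lemma GridOrientation.Arrow.not_symm {x y : Fin m × Fin n} (h : o.Arrow x y) : ¬ o.Arrow y x := by
  have := (o.dir_total _ _ h.adj).1 h
  simp [GridOrientation.Arrow, this]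

lemma GridAdj.arrow_or {x y : Fin m × Fin n} (h : GridAdj x y) : o.Arrow x y ∨ o.Arrow y x := by
  have := o.dir_total _ _ h
  unfold GridOrientation.Arrow
  cases h1 : o.dir x y <;> cases h2 : o.dir y x <;> simp_all

lemma IsUSO.exists_sink (h : IsUSO o) (I : Set (Fin m)) (J : Set (Fin n)) (hI : I.Nonempty)
    (hJ : J.Nonempty) : ∃ x, x.1 ∈ I ∧ x.2 ∈ J ∧ ∀ y, y.1 ∈ I → y.2 ∈ J → ¬ o.Arrow x y := by
  obtain ⟨x, ⟨h1, h2, h3⟩, -⟩ := h I J hI hJ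
  exact ⟨x, h1, h2, fun y hy hy' => by simp [GridOrientation.Arrow, h3 y hy hy']⟩

lemma GridOrientation.dir_self (o : GridOrientation m n) (x : Fin m × Fin n) :
    o.dir x x = false := by
  cases h : o.dir x x
  · rfl
  · exact absurd rfl (o.dir_adj _ _ h).1

/-- Opposite corners of a `2 × 2` subgrid cannot both be sinks. -/
lemma IsUSO.square (h : IsUSO o) {x x' : Fin m} {y y' : Fin n}
    (h1 : o.Arrow (x, y') (x, y)) (h2 : o.Arrow (x', y) (x, y))
    (h3 : o.Arrow (x, y') (x', y')) (h4 : o.Arrow (x', y) (x', y')) : False := by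
  have key := (h {x, x'} {y, y'} ⟨x, by simp⟩ ⟨y, by simp⟩).unique
    (y₁ := (x, y)) (y₂ := (x', y')) ?_ ?_
  · have hx : y = y' := congrArg Prod.snd key
    subst hx
    exact h1.adj.1 rfl
  · refine ⟨by simp, by simp, ?_⟩
    -- opposite corners are not adjacent
    have h5 : o.dir (x, y) (x', y') = false := by
      by_contra h6
      have := (o.dir_adj _ _ (by simpa using h6)).2
      rcases this with h7 | h7
      · exact h2.adj.1 (by simp_all)
      · exact h1.adj.1 (by simp_all)
    rintro ⟨p, q⟩ (rfl | rfl) (rfl | rfl)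
    · exact o.dir_self _
    · simpa [GridOrientation.Arrow] using h1.not_symm
    · simpa [GridOrientation.Arrow] using h2.not_symm
    · exact h5
  · refine ⟨by simp, by simp, ?_⟩
    have h5 : o.dir (x', y') (x, y) = false := by
      by_contra h6
      have := (o.dir_adj _ _ (by simpa using h6)).2
      rcases this with h7 | h7
      · exact h2.adj.1 (by simp_all)
      · exact h1.adj.1 (by simp_all)
    rintro ⟨p, q⟩ (rfl | rfl) (rfl | rfl)
    · exact h5
    · simpa [GridOrientation.Arrow] using h3.not_symm
    · simpa [GridOrientation.Arrow] using h4.not_symm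
    · exact o.dir_self _

/-- A line of a grid USO carries no directed triangle, and a directed triangle in the grid
would have to lie on a line. -/
lemma IsUSO.no_triangle (h : IsUSO o) {x y z : Fin m × Fin n} (h1 : o.Arrow x y)
    (h2 : o.Arrow y z) (h3 : o.Arrow z x) : False := by
  obtain ⟨x1, x2⟩ := x
  obtain ⟨y1, y2⟩ := y
  obtain ⟨z1, z2⟩ := z
  have a1 := h1.adj
  have a2 := h2.adj
  have a3 := h3.adj
  have hl : (x1 = y1 ∧ x1 = z1) ∨ (x2 = y2 ∧ x2 = z2) := by
    simp only [GridAdj, ne_eq, Prod.mk.injEq] at a1 a2 a3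
    grind
  rcases hl with ⟨rfl, rfl⟩ | ⟨rfl, rfl⟩
  · obtain ⟨⟨w1, w2⟩, hw1, hw2, hw⟩ :=
      h.exists_sink {x1} {x2, y2, z2} ⟨x1, rfl⟩ ⟨x2, by simp⟩
    obtain rfl : w1 = x1 := hw1
    rcases hw2 with rfl | rfl | rfl
    · exact hw _ (by simp) (by simp) h1
    · exact hw _ (by simp) (by simp) h2
    · exact hw _ (by simp) (by simp) h3
  · obtain ⟨⟨w1, w2⟩, hw1, hw2, hw⟩ :=
      h.exists_sink {x1, y1, z1} {x2} ⟨x1, by simp⟩ ⟨x2, rfl⟩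
    obtain rfl : w2 = x2 := hw2
    rcases hw1 with rfl | rfl | rfl
    · exact hw _ (by simp) (by simp) h1
    · exact hw _ (by simp) (by simp) h2
    · exact hw _ (by simp) (by simp) h3

/-! ### Shape of a shortest directed cycle -/

/-- `u` runs periodically, with period `L`, through a directed cycle, and every closed walk of
positive length has length at least `L`. -/
structure MinCycle (o : GridOrientation m n) (L : ℕ) (u : ℕ → Fin m × Fin n) : Prop where
  pos : 0 < L
  min : ∀ l, 0 < l → l < L → ∀ x, ¬ RelWalk o.Arrow l x x
  step : ∀ t, o.Arrow (u t) (u (t + 1))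
  per : ∀ t, u (t + L) = u t

namespace MinCycle

variable {L : ℕ} {u : ℕ → Fin m × Fin n}

lemma shift (C : MinCycle o L u) : MinCycle o L (fun t => u (t + 1)) :=
  ⟨C.pos, C.min, fun t => C.step (t + 1), fun t => by
    rw [← C.per (t + 1), Nat.add_right_comm]⟩

lemma no_shortcut (C : MinCycle o L u) {l s t : ℕ} (hst : s < t) (hts : t < s + L)
    (hl : l < t - s) : ¬ RelWalk o.Arrow l (u s) (u t) := fun hw => by
  have h1 := RelWalk.of_seq C.step t (s + L - t)
  rw [show t + (s + L - t) = s + L by omega, C.per] at h1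
  exact C.min _ (by omega) (by omega) _ (hw.append h1)

lemma no_shortcut' (C : MinCycle o L u) {l s t : ℕ} (hst : s < t) (hts : t < s + L)
    (hl : l < s + L - t) : ¬ RelWalk o.Arrow l (u t) (u s) := by
  rw [← C.per s]
  exact C.no_shortcut hts (by omega) hl

lemma four_le (C : MinCycle o L u) (h : IsUSO o) : 4 ≤ L := by
  by_contra hL
  have h0 := C.step 0
  have h1 := C.step 1
  have h2 := C.step 2
  have hp := C.per 0
  have := C.pos
  obtain rfl | rfl | rfl : L = 1 ∨ L = 2 ∨ L = 3 := by omega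
  · simp only [zero_add] at hp h0
    rw [hp] at h0
    exact h0.adj.1 rfl
  · simp only [zero_add, Nat.reduceAdd] at hp h0 h1
    rw [hp] at h1
    exact h0.not_symm h1
  · simp only [zero_add, Nat.reduceAdd] at hp h0 h1 h2
    rw [hp] at h2
    exact h.no_triangle h0 h1 h2

/-- Non-consecutive vertices of a shortest cycle lie on no common line: no chords. -/
lemma no_line (C : MinCycle o L u) {s t : ℕ} (hst : s + 2 ≤ t) (hts : t + 2 ≤ s + L) :
    (u s).1 ≠ (u t).1 ∧ (u s).2 ≠ (u t).2 := by
  by_contra hc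
  have hne : u s ≠ u t := fun he =>
    C.no_shortcut (l := 0) (s := s) (t := t) (by omega) (by omega) (by omega) he
  have hadj : GridAdj (u s) (u t) := ⟨hne, by tauto⟩
  rcases hadj.arrow_or (o := o) with ha | ha
  · exact C.no_shortcut (by omega) (by omega) (by omega) (RelWalk.single ha)
  · exact C.no_shortcut' (by omega) (by omega) (by omega) (RelWalk.single ha)

lemma alternate (C : MinCycle o L u) (h : IsUSO o) (t : ℕ) :
    (u t).1 = (u (t + 1)).1 ↔ (u (t + 1)).2 = (u (t + 2)).2 := by
  have h4 := C.four_le h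
  have h1 := (C.step t).adj.2
  have h2 := (C.step (t + 1)).adj.2
  have hn := C.no_line (s := t) (t := t + 2) le_rfl (by omega)
  rw [show t + 1 + 1 = t + 2 from rfl] at h2
  constructor
  · intro h3
    rcases h2 with h2 | h2
    · exact absurd (h3.trans h2) hn.1
    · exact h2
  · intro h3
    rcases h1 with h1 | h1
    · exact h1
    · exact absurd (h1.trans h3) hn.2

lemma not_both (C : MinCycle o L u) (t : ℕ) (h1 : (u t).1 = (u (t + 1)).1)
    (h2 : (u t).2 = (u (t + 1)).2) : False :=
  (C.step t).adj.1 (Prod.ext h1 h2)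

lemma row_col (C : MinCycle o L u) (h : IsUSO o) (h0 : (u 0).1 = (u 1).1) (i : ℕ) :
    (u (2 * i)).1 = (u (2 * i + 1)).1 ∧ (u (2 * i + 1)).2 = (u (2 * i + 2)).2 := by
  have key : (u (2 * i)).1 = (u (2 * i + 1)).1 := by
    induction i with
    | zero => simpa using h0
    | succ i ih =>
      have h1 := (C.alternate h _).1 ih
      rcases (C.step (2 * i + 2)).adj.2 with h2 | h2
      · exact h2
      · -- two consecutive column steps are impossible
        have h3 := (C.alternate h (2 * i + 1)).2 h2
        exact (C.not_both _ h3 h1).elim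
  exact ⟨key, (C.alternate h _).1 key⟩

lemma even (C : MinCycle o L u) (h : IsUSO o) (h0 : (u 0).1 = (u 1).1) : ∃ k, L = 2 * k := by
  rcases Nat.even_or_odd' L with ⟨k, hk | hk⟩
  · exact ⟨k, hk⟩
  · have h1 := (C.row_col h h0 k).2
    have e1 : u (2 * k + 1) = u 0 := by rw [← hk, ← C.per 0, zero_add]
    have e2 : u (2 * k + 2) = u 1 := by rw [← C.per 1]; congr 1; omega
    rw [e1, e2] at h1
    exact (C.not_both 0 h0 h1).elim

/-! ### Types of off vertices -/

/-- The vertex of the grid in the row of `u (2 i)` and the column of `u (2 j)`. -/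
def off (u : ℕ → Fin m × Fin n) (i j : ℕ) : Fin m × Fin n := ((u (2 * i)).1, (u (2 * j)).2)

/-- Type S for the vertex `off u i j`; for off vertices (`i + 2 ≤ j < i + k`) the single edge
recorded here determines the other three, see `MinCycle.classify`. -/
def TypeS (o : GridOrientation m n) (u : ℕ → Fin m × Fin n) (i j : ℕ) : Prop :=
  o.Arrow (u (2 * i)) (off u i j)

variable {k : ℕ}

/-- All four edges between an off vertex and the cycle vertices in its row and column have the
same direction as seen from the off vertex. -/
lemma classify (C : MinCycle o (2 * k) u) (h : IsUSO o) (h0 : (u 0).1 = (u 1).1) {i j : ℕ}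
    (h1 : i + 2 ≤ j) (h2 : j + 1 ≤ i + k) :
    (TypeS o u i j → o.Arrow (u (2 * i + 1)) (off u i j) ∧
      o.Arrow (u (2 * j - 1)) (off u i j) ∧ o.Arrow (u (2 * j)) (off u i j)) ∧
    (¬ TypeS o u i j → o.Arrow (off u i j) (u (2 * i)) ∧ o.Arrow (off u i j) (u (2 * i + 1)) ∧
      o.Arrow (off u i j) (u (2 * j - 1)) ∧ o.Arrow (off u i j) (u (2 * j))) := by
  unfold TypeS
  have hr := (C.row_col h h0 i).1
  have hc : (u (2 * j - 1)).2 = (u (2 * j)).2 := by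
    have := (C.row_col h h0 (j - 1)).2
    rwa [show 2 * (j - 1) + 1 = 2 * j - 1 by omega, show 2 * (j - 1) + 2 = 2 * j by omega] at this
  have adj1 : GridAdj (u (2 * i)) (off u i j) := by
    refine ⟨fun he => (C.no_line (s := 2 * i) (t := 2 * j) (by omega) (by omega)).2 ?_, Or.inl rfl⟩
    exact (congrArg Prod.snd he :)
  have adj2 : GridAdj (u (2 * i + 1)) (off u i j) := by
    refine ⟨fun he => (C.no_line (s := 2 * i + 1) (t := 2 * j) (by omega) (by omega)).2 ?_,
      Or.inl hr.symm⟩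
    exact (congrArg Prod.snd he :)
  have adj3 : GridAdj (u (2 * j - 1)) (off u i j) := by
    refine ⟨fun he => (C.no_line (s := 2 * i) (t := 2 * j - 1) (by omega) (by omega)).1 ?_,
      Or.inr hc⟩
    exact (congrArg Prod.fst he).symm
  have adj4 : GridAdj (u (2 * j)) (off u i j) := by
    refine ⟨fun he => (C.no_line (s := 2 * i) (t := 2 * j) (by omega) (by omega)).1 ?_, Or.inr rfl⟩
    exact (congrArg Prod.fst he).symm
  have a1 := adj1.arrow_or (o := o)
  have a2 := adj2.arrow_or (o := o)
  have a3 := adj3.arrow_or (o := o)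
  have a4 := adj4.arrow_or (o := o)
  -- forbidden two-step shortcuts from the row to the column
  have n14 : o.Arrow (u (2 * i)) (off u i j) → ¬ o.Arrow (off u i j) (u (2 * j)) := fun p q =>
    C.no_shortcut (by omega) (by omega) (by omega) (RelWalk.two p q)
  have n13 : o.Arrow (u (2 * i)) (off u i j) → ¬ o.Arrow (off u i j) (u (2 * j - 1)) := fun p q =>
    C.no_shortcut (by omega) (by omega) (by omega) (RelWalk.two p q)
  -- forbidden two-step shortcuts from the column to the row
  have n32 : o.Arrow (u (2 * j - 1)) (off u i j) → ¬ o.Arrow (off u i j) (u (2 * i + 1)) :=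
    fun p q => C.no_shortcut' (by omega) (by omega) (by omega) (RelWalk.two p q)
  have n31 : o.Arrow (u (2 * j - 1)) (off u i j) → ¬ o.Arrow (off u i j) (u (2 * i)) :=
    fun p q => C.no_shortcut' (by omega) (by omega) (by omega) (RelWalk.two p q)
  have n42 : o.Arrow (u (2 * j)) (off u i j) → ¬ o.Arrow (off u i j) (u (2 * i + 1)) :=
    fun p q => C.no_shortcut' (by omega) (by omega) (by omega) (RelWalk.two p q)
  have n21 : o.Arrow (u (2 * i + 1)) (off u i j) → ¬ o.Arrow (off u i j) (u (2 * i)) :=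
    fun p q => h.no_triangle (C.step _) p q
  refine ⟨fun p1 => ?_, fun p1 => ?_⟩
  · have p3 := a3.resolve_right (n13 p1)
    exact ⟨a2.resolve_right (n32 p3), p3, a4.resolve_right (n14 p1)⟩
  · have q1 := a1.resolve_left p1
    have q2 := a2.resolve_left fun p => n21 p q1
    exact ⟨q1, q2, a3.resolve_left fun p => n31 p q1, a4.resolve_left fun p => n42 p q2⟩

lemma off_per (C : MinCycle o (2 * k) u) (i j : ℕ) : off u i (j + k) = off u i j := by
  simp only [off, Nat.mul_add, C.per]

lemma typeS_per (C : MinCycle o (2 * k) u) (i j : ℕ) :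
    TypeS o u (i + k) (j + k) ↔ TypeS o u i j := by
  simp only [TypeS, off, Nat.mul_add, C.per]

lemma odd_eq (C : MinCycle o (2 * k) u) (h : IsUSO o) (h0 : (u 0).1 = (u 1).1) (i : ℕ) :
    u (2 * i + 1) = ((u (2 * i)).1, (u (2 * (i + 1))).2) :=
  Prod.ext (C.row_col h h0 i).1.symm (C.row_col h h0 i).2

lemma ruleA (C : MinCycle o (2 * k) u) (h : IsUSO o) (h0 : (u 0).1 = (u 1).1) {i j : ℕ}
    (h1 : i + 2 ≤ j) (h2 : j + 1 ≤ i + k) :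
    TypeS o u i j ↔ ¬ TypeS o u j (i + 1 + k) := by
  obtain ⟨s1, t1⟩ := C.classify h h0 h1 h2
  obtain ⟨s2, t2⟩ := C.classify h h0 (i := j) (j := i + 1 + k) (by omega) (by omega)
  rw [C.off_per, show 2 * (i + 1 + k) - 1 = 2 * i + 1 + 2 * k by omega, C.per] at s2 t2
  constructor
  · intro p q
    obtain ⟨p2, -, p4⟩ := s1 p
    obtain ⟨-, q3, -⟩ := s2 q
    have q1 : o.Arrow (u (2 * j)) (off u j (i + 1)) := by
      rw [← C.off_per]; exact q
    rw [C.odd_eq h h0] at p2 q3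
    exact h.square p2 p4 q3 q1
  · intro q
    by_contra p
    obtain ⟨-, p2, -, p4⟩ := t1 p
    obtain ⟨q1, -, q3, -⟩ := t2 q
    rw [C.odd_eq h h0] at p2 q3
    exact h.square p2 q3 p4 q1

lemma ruleB (C : MinCycle o (2 * k) u) (h : IsUSO o) (h0 : (u 0).1 = (u 1).1) {i j : ℕ}
    (h1 : i + 2 ≤ j) (h2 : j + 2 ≤ i + k) :
    TypeS o u i j ↔ ¬ TypeS o u j (i + k) := by
  obtain ⟨s1, t1⟩ := C.classify h h0 h1 (by omega)
  obtain ⟨s2, t2⟩ := C.classify h h0 (i := j) (j := i + k) (by omega) (by omega)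
  rw [C.off_per, Nat.mul_add 2 i k, C.per] at s2 t2
  constructor
  · intro p q
    obtain ⟨-, -, p4⟩ := s1 p
    obtain ⟨-, -, q4⟩ := s2 q
    have q1 : o.Arrow (u (2 * j)) (off u j i) := by
      rw [← C.off_per]; exact q
    exact h.square p p4 q4 q1
  · intro q
    by_contra p
    obtain ⟨p1, -, -, p4⟩ := t1 p
    obtain ⟨q1, -, -, q4⟩ := t2 q
    exact h.square p1 q4 p4 q1

lemma row_const (C : MinCycle o (2 * k) u) (h : IsUSO o) (h0 : (u 0).1 = (u 1).1) (i d : ℕ)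
    (hd : d + 3 ≤ k) : TypeS o u i (i + 2 + d) ↔ TypeS o u i (i + 2) := by
  induction d with
  | zero => rfl
  | succ d ih =>
    rw [← ih (by omega), C.ruleB h h0 (i := i) (j := i + 2 + d) (by omega) (by omega),
      C.ruleA h h0 (i := i + 2 + d) (j := i + k) (by omega) (by omega), not_not, C.typeS_per]
    rfl

lemma false_of_row (C : MinCycle o L u) (h : IsUSO o) (h0 : (u 0).1 = (u 1).1) : False := by
  obtain ⟨k, rfl⟩ := C.even h h0
  have h4 := C.four_le h
  obtain rfl | hk : k = 2 ∨ 3 ≤ k := by omega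
  · -- a cyclically oriented `2 × 2` grid has no sink
    have e0 := C.odd_eq h h0 0
    have e1 := C.odd_eq h h0 1
    have p4 := C.per 0
    have s0 := C.step 0
    have s1 := C.step 1
    have s2 := C.step 2
    have s3 := C.step 3
    simp only [Nat.reduceMul, Nat.reduceAdd, zero_add] at e0 e1 p4 s0 s1 s2 s3
    rw [p4] at e1 s3
    obtain ⟨⟨x, y⟩, hx, hy, hs⟩ := h.exists_sink {(u 0).1, (u 2).1} {(u 0).2, (u 2).2}
      ⟨_, Or.inl rfl⟩ ⟨_, Or.inl rfl⟩
    rcases hx with rfl | rfl <;> rcases hy with rfl | rfl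
    · exact hs (u 1) (by simp [e0]) (by simp [e0]) s0
    · rw [e0] at s1
      exact hs (u 2) (by simp) (by simp) s1
    · rw [e1] at s3
      exact hs (u 0) (by simp) (by simp) s3
    · exact hs (u 3) (by simp [e1]) (by simp [e1]) s2
  · -- `R i` is the type of row `i`
    set R : ℕ → Prop := fun i => TypeS o u i (i + 2) with hR
    have hlast : ∀ i, TypeS o u i (i + k - 1) ↔ R i := fun i => by
      have := C.row_const h h0 i (k - 3) (by omega)
      rwa [show i + 2 + (k - 3) = i + k - 1 by omega] at this
    have r2 : R 0 ↔ ¬ R 2 := by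
      rw [← hlast 2, show 2 + k - 1 = 0 + 1 + k by omega]
      exact C.ruleA h h0 (by omega) (by omega)
    have rn : ∀ i, R (i + 1) ↔ ¬ R i := fun i => by
      rw [← hlast (i + 1), C.ruleA h h0 (by omega) (by omega),
        show i + 1 + k - 1 = i + k by omega, show i + 1 + 1 + k = i + 2 + k by omega, C.typeS_per]
    have r0 := rn 0
    have r1 := rn 1
    simp only [Nat.reduceAdd] at r0 r1
    tauto

end MinCycle

/-! ### Acyclicity -/

/-- Grid USOs are acyclic. -/
theorem IsUSO.acyclic (h : IsUSO o) {l : ℕ} (hl : 0 < l) (x : Fin m × Fin n) :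
    ¬ RelWalk o.Arrow l x x := by
  classical
  intro hx
  have hex : ∃ l, 0 < l ∧ ∃ x, RelWalk o.Arrow l x x := ⟨l, hl, x, hx⟩
  obtain ⟨hpos, y, hy⟩ := Nat.find_spec hex
  obtain ⟨u, hu, hper⟩ := hy.exists_periodic hpos
  have C : MinCycle o (Nat.find hex) u :=
    ⟨hpos, fun l h1 h2 z hz => Nat.find_min hex h2 ⟨h1, z, hz⟩, hu, hper⟩
  rcases (C.step 0).adj.2 with h0 | h0
  · exact C.false_of_row h h0
  · -- if the first step is a column step, start the cycle at its second vertex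
    refine C.shift.false_of_row h ?_
    rcases (C.step 1).adj.2 with h1 | h1
    · exact h1
    · exact (C.not_both 0 ((C.alternate h 0).2 h1) h0).elim

lemma IsUSO.dir_eq_false_of_reaches (h : IsUSO o) {x y : Fin m × Fin n} (hr : Reaches o x y) :
    o.dir y x = false := by
  by_contra hc
  have ha : o.Arrow y x := by simpa [GridOrientation.Arrow] using hc
  obtain ⟨l, hl⟩ := RelWalk.of_reflTransGen hr
  exact h.acyclic (Nat.succ_pos _) x (show RelWalk o.Arrow (l + 1) x x from ⟨y, hl, ha⟩)

end Basic

/-- every vertex `v` is the unique sink of the subgrid `I_v × J_v`. -/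
theorem vertex_unique_sink_of_reach_subgrid {m n : ℕ} (o : GridOrientation m n)
    (h : IsUSO o) (v : Fin m × Fin n) :
    IsSinkIn o (rowSet o v) (colSet o v) v ∧
      ∀ w : Fin m × Fin n, IsSinkIn o (rowSet o v) (colSet o v) w → w = v := by
  have hv1 : v.1 ∈ rowSet o v := Relation.ReflTransGen.refl
  have hv2 : v.2 ∈ colSet o v := Relation.ReflTransGen.refl
  have hs : IsSinkIn o (rowSet o v) (colSet o v) v := by
    refine ⟨hv1, hv2, fun w hw1 hw2 => ?_⟩
    by_contra hc
    rcases (o.dir_adj v w (by simpa using hc)).2 with he | he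
    · have hr : Reaches o (v.1, w.2) v := hw2
      rw [he] at hr
      exact hc (h.dir_eq_false_of_reaches hr)
    · have hr : Reaches o (w.1, v.2) v := hw1
      rw [he] at hr
      exact hc (h.dir_eq_false_of_reaches hr)
  exact ⟨hs, fun w hw => (h _ _ ⟨_, hv1⟩ ⟨_, hv2⟩).unique hw hs⟩
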